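/- Let G = (V, E) be a graph and let TH̃(G) := {X̂ ∈ S₊^{{0}∪V} : X̂_{00} = 1, X̂_{0i} = X̂_{ii} ∀i ∈ V, X̂_{ij} = 0 ∀ij ∈ E} be the lifted theta body. Then the vertices of TH̃(G) are exactly the matrices (1 ⊕ χ_S)(1 ⊕ χ_S)ᵀ where S ⊆ V is a stable (independent) set of G and χ_S is its incidence vector. -/

import Mathlib

open Matrix

/-- The normal cone, within the space of symmetric matrices (with the trace inner
product), of a set `C` of symmetric matrices at a point `X`. -/
def normalConeM {ι : Type*} [Fintype ι] (C : Set (Matrix ι ι ℝ)) (X : Matrix ι ι ℝ) :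
    Set (Matrix ι ι ℝ) :=
  {c | c.IsSymm ∧ ∀ Y ∈ C, (c * Y).trace ≤ (c * X).trace}

/-- A point of a convex set of symmetric matrices is a vertex if its normal cone is
full-dimensional in the space `Sym(ι)` of symmetric matrices, whose dimension is
`card ι * (card ι + 1) / 2`. -/
def IsVertex {ι : Type*} [Fintype ι] (C : Set (Matrix ι ι ℝ)) (X : Matrix ι ι ℝ) : Prop :=
  X ∈ C ∧ Module.finrank ℝ (Submodule.span ℝ (normalConeM C X))
      = Fintype.card ι * (Fintype.card ι + 1) / 2

set_option linter.unusedSimpArgs false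

def symSub (ι : Type*) : Submodule ℝ (Matrix ι ι ℝ) where
  carrier := {A | A.IsSymm}
  add_mem' := fun ha hb => ha.add hb
  zero_mem' := Matrix.isSymm_zero
  smul_mem' := fun c _ ha => ha.smul c

theorem mem_symSub {ι : Type*} {A : Matrix ι ι ℝ} : A ∈ symSub ι ↔ A.IsSymm := Iff.rfl

def symEquiv (ι : Type*) : symSub ι ≃ₗ[ℝ] (Sym2 ι → ℝ) where
  toFun A := fun s => Sym2.lift ⟨fun i j => A.1 i j, fun i j => (A.2.apply j i)⟩ s
  invFun f := ⟨Matrix.of fun i j => f s(i, j), by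
    refine mem_symSub.2 (Matrix.IsSymm.ext fun i j => ?_)
    simp [Sym2.eq_swap]⟩
  left_inv A := by ext i j; simp
  right_inv f := by ext s; induction s with | _ i j => simp
  map_add' A B := by ext s; induction s with | _ i j => simp
  map_smul' c A := by ext s; induction s with | _ i j => simp

theorem finrank_symSub (ι : Type*) [Fintype ι] :
    Module.finrank ℝ (symSub ι) = Fintype.card ι * (Fintype.card ι + 1) / 2 := by
  classical
  rw [(symEquiv ι).finrank_eq, Module.finrank_fintype_fun_eq_card, Sym2.card, Nat.choose_two_right,
    Nat.add_sub_cancel, mul_comm]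

theorem span_le_symSub {ι : Type*} [Fintype ι] (C : Set (Matrix ι ι ℝ)) (X : Matrix ι ι ℝ) :
    Submodule.span ℝ (normalConeM C X) ≤ symSub ι :=
  Submodule.span_le.2 fun _ hc => hc.1

theorem isVertex_iff {ι : Type*} [Fintype ι] (C : Set (Matrix ι ι ℝ)) (X : Matrix ι ι ℝ) :
    IsVertex C X ↔ X ∈ C ∧ Submodule.span ℝ (normalConeM C X) = symSub ι := by
  unfold IsVertex
  rw [← finrank_symSub]
  refine and_congr_right fun _ => ⟨fun h => ?_, fun h => by rw [h]⟩
  exact Submodule.eq_of_le_of_finrank_eq (span_le_symSub C X) h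

def thetaLift {V : Type*} [Fintype V] (G : SimpleGraph V) : Set (Matrix (Option V) (Option V) ℝ) :=
  {X | X.PosSemidef ∧ X none none = 1 ∧
      (∀ i : V, X none (some i) = X (some i) (some i)) ∧
      (∀ i j : V, G.Adj i j → X (some i) (some j) = 0)}

theorem psd_zero {ι : Type*} [Fintype ι] [DecidableEq ι] {X : Matrix ι ι ℝ} (h : X.PosSemidef)
    (k i : ι) (hk : X k k = 0) : X i k = 0 := by
  have := (h.dotProduct_mulVec_zero_iff (Pi.single k 1)).1 (by simp [hk])
  have := congrFun this i
  simpa using this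

theorem lin_zero (a b : ℝ) (h : ∀ t : ℝ, t * a + t ^ 2 * b ≤ 0) : a = 0 := by
  by_contra hne
  have hp : 0 < a ^ 2 := by positivity
  have h1 := h (a / (1 + |b|))
  have hb : 0 < 1 + |b| := by positivity
  have : a / (1 + |b|) * a + (a / (1 + |b|)) ^ 2 * b = a ^ 2 * (1 + |b| + b) / (1 + |b|) ^ 2 := by
    field_simp
  rw [this] at h1
  have : 0 < a ^ 2 * (1 + |b| + b) / (1 + |b|) ^ 2 := by
    have := neg_abs_le b
    have : 0 < 1 + |b| + b := by linarith
    positivity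
  linarith

/-- the perturbation direction -/
noncomputable def pert {V : Type*} [DecidableEq V] (X : Matrix (Option V) (Option V) ℝ) (i : V) :
    Matrix (Option V) (Option V) ℝ :=
  Matrix.of fun a b => match b with
    | none => (if a = some i then 1 else 0) - (if a = none then X (some i) (some i) else 0)
    | some k => if a = some k then
        (X (some i) (some k) - X (some i) (some i) * X (some k) (some k)) / X (some k) (some k)
        else 0

theorem curve_mem {V : Type*} [Fintype V] [DecidableEq V] (G : SimpleGraph V)
    {X : Matrix (Option V) (Option V) ℝ} (hX : X ∈ thetaLift G) (i : V) (t : ℝ) :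
    let x := X (some i) (some i)
    0 < 1 + t ^ 2 * (x - x ^ 2) ∧
    (1 + t ^ 2 * (x - x ^ 2))⁻¹ • ((1 + t • pert X i)ᵀ * X * (1 + t • pert X i)) ∈ thetaLift G := by
  intro x
  obtain ⟨hp, h0, hd, hE⟩ := hX
  have hs : ∀ a b, X a b = X b a := fun a b => by simpa using hp.1.apply b a
  have hd' : ∀ i : V, X (some i) none = X (some i) (some i) := fun i => by rw [hs, hd]
  have hF := (hp.conjTranspose_mul_mul_same (pert X i)).diag_nonneg (i := none)
  have hFe : ((pert X i)ᴴ * X * pert X i) none none = x - x ^ 2 := by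
    simp [Matrix.mul_apply, pert, Fintype.sum_option, h0, hd, hd', sub_mul, mul_sub, 
      Finset.sum_ite_eq]
    ring
  rw [hFe] at hF
  have hpos : 0 < 1 + t ^ 2 * (x - x ^ 2) := by positivity
  refine ⟨hpos, ?_, ?_, ?_, ?_⟩
  · have := hp.conjTranspose_mul_mul_same (1 + t • pert X i)
    rw [Matrix.conjTranspose_eq_transpose_of_trivial] at this
    exact this.smul (by positivity)
  · have : ((1 + t • pert X i)ᵀ * X * (1 + t • pert X i) : Matrix (Option V) (Option V) ℝ) none none = 1 + t ^ 2 * (x - x ^ 2) := by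
      simp [Matrix.mul_apply, pert, Fintype.sum_option, h0, hd, hd', Matrix.one_apply, add_mul, mul_add,
        Finset.sum_add_distrib, sub_mul, mul_sub]
      ring
    rw [Matrix.smul_apply, this, smul_eq_mul, inv_mul_cancel₀ hpos.ne']
  · intro k
    rw [Matrix.smul_apply, Matrix.smul_apply]
    congr 1
    by_cases hk : X (some k) (some k) = 0
    · have h1 : ∀ a, X a (some k) = 0 := fun a => psd_zero hp k a hk
      simp [Matrix.mul_apply, pert, Fintype.sum_option, h0, hd, hd', Matrix.one_apply, add_mul, mul_add,
        Finset.sum_add_distrib, sub_mul, mul_sub, hk, h1]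
    · simp [Matrix.mul_apply, pert, Fintype.sum_option, h0, hd, hd', Matrix.one_apply, add_mul, mul_add,
        Finset.sum_add_distrib, sub_mul, mul_sub]
      field_simp
  · intro k l hkl
    have := hE k l hkl
    simp [Matrix.mul_apply, pert, Fintype.sum_option, h0, hd, hd', Matrix.one_apply, add_mul, mul_add,
        Finset.sum_add_distrib, sub_mul, mul_sub, this]

theorem vertex_eq {V : Type*} [Fintype V] [DecidableEq V] (G : SimpleGraph V)
    {X : Matrix (Option V) (Option V) ℝ} (hX : X ∈ thetaLift G)
    (hv : Submodule.span ℝ (normalConeM (thetaLift G) X) = symSub _) (i k : V) :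
    X (some i) (some k) = X (some i) (some i) * X (some k) (some k) := by
  have hp := hX.1
  have hs : ∀ a b, X a b = X b a := fun a b => by simpa using hp.1.apply b a
  by_cases hk : X (some k) (some k) = 0
  · rw [psd_zero hp _ _ hk, hk, mul_zero]
  set D := (pert X i)ᵀ * X + X * pert X i with hD
  have key : ∀ c ∈ normalConeM (thetaLift G) X, (c * D).trace = 0 := by
    intro c hc
    apply lin_zero _ ((c * ((pert X i)ᵀ * X * pert X i)).trace
      - (X (some i) (some i) - X (some i) (some i) ^ 2) * (c * X).trace)
    intro t
    obtain ⟨hpos, hm⟩ := curve_mem G hX i t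
    have := hc.2 _ hm
    rw [Matrix.mul_smul, Matrix.trace_smul, smul_eq_mul, inv_mul_le_iff₀ hpos] at this
    have e : (1 + t • pert X i)ᵀ * X * (1 + t • pert X i)
        = X + t • D + t ^ 2 • ((pert X i)ᵀ * X * pert X i) := by
      simp only [hD, Matrix.transpose_add, Matrix.transpose_one, Matrix.transpose_smul, add_mul, mul_add,
        one_mul, mul_one, Matrix.smul_mul, Matrix.mul_smul, smul_add, smul_smul, pow_two]
      abel
    rw [e] at this
    simp only [mul_add, Matrix.trace_add, Matrix.mul_smul, Matrix.trace_smul, smul_eq_mul] at this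
    linarith
  have key2 : ∀ c ∈ Submodule.span ℝ (normalConeM (thetaLift G) X), (c * D).trace = 0 := by
    intro c hc
    induction hc using Submodule.span_induction with
    | mem c h => exact key c h
    | zero => simp
    | add a b _ _ ha hb => rw [add_mul, Matrix.trace_add, ha, hb, add_zero]
    | smul r a _ ha => rw [Matrix.smul_mul, Matrix.trace_smul, ha, smul_zero]
  have h1 := key2 (Matrix.single (some k) (some k) 1) (by
    rw [hv, mem_symSub]; exact Matrix.transpose_single _ _ _)
  have h2 : D (some k) (some k) = 0 := by
    simpa [Matrix.trace_single_mul] using h1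
  have h3 : D (some k) (some k)
      = 2 * (X (some i) (some k) - X (some i) (some i) * X (some k) (some k)) := by
    simp [hD, Matrix.mul_apply, pert, Fintype.sum_option]
    field_simp
    ring
  linarith

theorem single_sym_trace {ι : Type*} [Fintype ι] [DecidableEq ι] (v : ι → ℝ) (Y : Matrix ι ι ℝ) :
    (vecMulVec v v * Y).trace = v ⬝ᵥ (Y *ᵥ v) := by
  rw [Matrix.vecMulVec_mul, Matrix.trace_vecMulVec, Matrix.dotProduct_mulVec, dotProduct_comm]

theorem span_full {V : Type*} [Fintype V] [DecidableEq V] (G : SimpleGraph V)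
    (u : Option V → ℝ) (h0 : u none = 1) (hu : ∀ i, u (some i) = 0 ∨ u (some i) = 1)
    (hX : vecMulVec u u ∈ thetaLift G) :
    Submodule.span ℝ (normalConeM (thetaLift G) (vecMulVec u u)) = symSub _ := by
  refine le_antisymm (span_le_symSub _ _) ?_
  set W := Submodule.span ℝ (normalConeM (thetaLift G) (vecMulVec u u)) with hW
  have hvv : ∀ v : Option V → ℝ, v ⬝ᵥ u = 0 → vecMulVec v v ∈ W := by
    intro v hv
    rw [← neg_mem_iff]
    refine Submodule.subset_span ⟨?_, fun Y hY => ?_⟩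
    · ext a b; simp [vecMulVec_apply, mul_comm]
    · rw [neg_mul, neg_mul, Matrix.trace_neg, Matrix.trace_neg, single_sym_trace, single_sym_trace]
      have h1 := hY.1.dotProduct_mulVec_nonneg v
      have h2 : v ⬝ᵥ (vecMulVec u u *ᵥ v) = 0 := by
        rw [Matrix.vecMulVec_mulVec, dotProduct_comm u v, hv]; simp
      simp only [star_trivial] at h1
      linarith
  have hE0 : Matrix.single none none (1 : ℝ) ∈ W := by
    refine Submodule.subset_span ⟨Matrix.transpose_single _ _ _, fun Y hY => ?_⟩
    simp [Matrix.trace_single_mul, hY.2.1, vecMulVec_apply, h0]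
  let B : V → Matrix (Option V) (Option V) ℝ := fun i => Matrix.single none (some i) (1 : ℝ) +
    Matrix.single (some i) none 1 - (2 : ℝ) • Matrix.single (some i) (some i) 1
  have hBs : ∀ i, (B i).IsSymm := by
    intro i
    simp [B, Matrix.IsSymm, Matrix.transpose_single, add_comm]
  have hB : ∀ i, B i ∈ W := by
    intro i
    have hc : ∀ Y ∈ thetaLift G, (B i * Y).trace = 0 := by
      intro Y hY
      have hs : Y (some i) none = Y none (some i) := by simpa using hY.1.1.apply none (some i)
      simp only [B, sub_mul, add_mul, Matrix.smul_mul, Matrix.trace_sub, Matrix.trace_add,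
        Matrix.trace_smul, Matrix.trace_single_mul, hs, hY.2.2.1 i, smul_eq_mul]
      ring
    exact Submodule.subset_span ⟨hBs i, fun Y hY => by rw [hc Y hY, hc _ hX]⟩
  have hker : ∀ K : Matrix (Option V) (Option V) ℝ, K.IsSymm → K *ᵥ u = 0 → K ∈ W := by
    intro K hK hKu
    let f : Option V → Option V → ℝ := fun i => Pi.single i 1 - u i • Pi.single none 1
    have hf : ∀ i, f i ⬝ᵥ u = 0 := by
      intro i
      simp [f, sub_dotProduct, h0]
    have hpol : ∀ i j, vecMulVec (f i) (f j) + vecMulVec (f j) (f i) ∈ W := by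
      intro i j
      have h1 := hvv (f i + f j) (by rw [add_dotProduct, hf, hf, add_zero])
      have : vecMulVec (f i) (f j) + vecMulVec (f j) (f i) =
        vecMulVec (f i + f j) (f i + f j) - vecMulVec (f i) (f i) - vecMulVec (f j) (f j) := by
        ext a b; simp [vecMulVec_apply]; ring
      rw [this]
      exact W.sub_mem (W.sub_mem h1 (hvv _ (hf i))) (hvv _ (hf j))
    have hrow : ∀ a, ∑ j, K a j * u j = 0 := fun a => congrFun hKu a
    have hcol : ∀ a, ∑ j, u j * K j a = 0 := fun a => by
      rw [← hrow a]; exact Finset.sum_congr rfl fun j _ => by rw [hK.apply, mul_comm]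
    have e1 : ∑ i, ∑ j, K i j • vecMulVec (f i) (f j) = K := by
      have e : ∑ i, ∑ j, K i j • vecMulVec (f i) (f j)
          = (Matrix.of f)ᵀ * K * Matrix.of f := by
        ext a b
        simp only [Matrix.sum_apply, Matrix.smul_apply, vecMulVec_apply, Matrix.mul_apply,
          Matrix.transpose_apply, Matrix.of_apply, smul_eq_mul, Finset.sum_mul]
        rw [Finset.sum_comm]
        exact Finset.sum_congr rfl fun _ _ => Finset.sum_congr rfl fun _ _ => by ring
      have e2 : Matrix.of f = 1 - vecMulVec u (Pi.single none 1) := by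
        ext a b
        simp [f, vecMulVec_apply, Matrix.one_apply, Pi.single_apply, eq_comm]
      have e3 : K * Matrix.of f = K := by
        rw [e2, mul_sub, mul_one, Matrix.mul_vecMulVec, hKu]; simp
      have e4 : (Matrix.of f)ᵀ * K = K := by
        have := congrArg Matrix.transpose e3
        rwa [Matrix.transpose_mul, hK.eq] at this
      rw [e, e4, e3]
    have e2 : ∑ i, ∑ j, K i j • vecMulVec (f j) (f i) = K := by
      conv_rhs => rw [← e1, Finset.sum_comm]
      exact Finset.sum_congr rfl fun _ _ => Finset.sum_congr rfl fun _ _ => by rw [hK.apply]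
    have e3 : K = (1 / 2 : ℝ) • ∑ i, ∑ j, K i j • (vecMulVec (f i) (f j) + vecMulVec (f j) (f i)) := by
      simp only [smul_add, Finset.sum_add_distrib, e1, e2]
      rw [← add_smul]; norm_num
    rw [e3]
    exact W.smul_mem _ (W.sum_mem fun i _ => W.sum_mem fun j _ => W.smul_mem _ (hpol i j))
  intro M hM
  let a := M *ᵥ u
  let r : V → ℝ := fun i => a (some i) * (1 - 2 * u (some i))
  let N := (a none - ∑ i, r i * u (some i)) • Matrix.single none none (1 : ℝ) + ∑ i, r i • B i
  have hN : N ∈ W := W.add_mem (W.smul_mem _ hE0) (W.sum_mem fun i _ => W.smul_mem _ (hB i))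
  have hNs : N.IsSymm := span_le_symSub _ _ hN
  have hBu : ∀ i, B i *ᵥ u = u (some i) • Pi.single none 1 +
      (1 - 2 * u (some i)) • Pi.single (some i) (1 : ℝ) := by
    intro i
    ext b
    simp [B, Matrix.sub_mulVec, Matrix.add_mulVec, Matrix.smul_mulVec, Matrix.single_mulVec, h0,
      Function.update_apply, Pi.single_apply]
    split_ifs <;> ring
  have hNu : N *ᵥ u = a := by
    simp only [N, Matrix.add_mulVec, Matrix.smul_mulVec, Matrix.sum_mulVec, hBu]
    ext b
    cases b with
    | none => simp [Matrix.single_mulVec, h0, Finset.sum_apply]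
    | some k =>
      have : (1 - 2 * u (some k)) * (1 - 2 * u (some k)) = 1 := by
        rcases hu k with h | h <;> rw [h] <;> norm_num
      simp [Matrix.single_mulVec, h0, Finset.sum_apply, Pi.single_apply, r, mul_assoc, this]
  have : M = (M - N) + N := by abel
  rw [this]
  refine W.add_mem (hker _ ?_ ?_) hN
  · exact Matrix.IsSymm.sub hM hNs
  · rw [Matrix.sub_mulVec, hNu, sub_self]

theorem lifted_theta_body_vertices {V : Type*} [Fintype V] [DecidableEq V] (G : SimpleGraph V)
    (TH : Set (Matrix (Option V) (Option V) ℝ))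
    (hTH : TH = {X | X.PosSemidef ∧ X none none = 1 ∧
      (∀ i : V, X none (some i) = X (some i) (some i)) ∧
      (∀ i j : V, G.Adj i j → X (some i) (some j) = 0)}) :
    {X | X ∈ TH ∧ IsVertex TH X} =
      {X | ∃ S : Finset V, (∀ i ∈ S, ∀ j ∈ S, ¬ G.Adj i j) ∧
        X = Matrix.vecMulVec (fun o => o.elim 1 fun i => if i ∈ S then 1 else 0)
              (fun o => o.elim 1 fun i => if i ∈ S then 1 else 0)} := by
  classical
  change TH = thetaLift G at hTH
  subst hTH
  ext X
  simp only [Set.mem_ofPred_eq, isVertex_iff]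
  constructor
  · rintro ⟨hX, -, hv⟩
    have hm := vertex_eq G hX hv
    obtain ⟨hp, h0, hd, hE⟩ := hX
    have hs : ∀ a b, X a b = X b a := fun a b => by simpa using hp.1.apply b a
    have h01 : ∀ i, X (some i) (some i) = if X (some i) (some i) = 1 then 1 else 0 := by
      intro i
      split_ifs with h
      · exact h
      · have := hm i i
        have : X (some i) (some i) * (X (some i) (some i) - 1) = 0 := by linarith
        rcases mul_eq_zero.1 this with h' | h'
        · exact h'
        · exact absurd (by linarith) h
    refine ⟨Finset.univ.filter fun i => X (some i) (some i) = 1, ?_, ?_⟩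
    · intro i hi j hj hij
      simp only [Finset.mem_filter, Finset.mem_univ, true_and] at hi hj
      have := hm i j
      rw [hE i j hij, hi, hj] at this
      norm_num at this
    · ext a b
      cases a with
      | none =>
        cases b with
        | none => simp [vecMulVec_apply, h0]
        | some j => simpa [vecMulVec_apply, hd] using h01 j
      | some i =>
        cases b with
        | none => rw [hs]; simpa [vecMulVec_apply, hd] using h01 i
        | some j =>
          rw [hm i j, h01 i, h01 j]; simp [vecMulVec_apply]
  · rintro ⟨S, hS, rfl⟩
    have hX : vecMulVec (fun o : Option V => o.elim (1 : ℝ) fun i => if i ∈ S then 1 else 0)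
              (fun o => o.elim 1 fun i => if i ∈ S then 1 else 0) ∈ thetaLift G := by
      refine ⟨?_, ?_, ?_, ?_⟩
      · simpa using Matrix.posSemidef_vecMulVec_self_star
          (fun o : Option V => o.elim (1 : ℝ) fun i => if i ∈ S then 1 else 0)
      · simp [vecMulVec_apply]
      · intro i; simp [vecMulVec_apply]
      · intro i j hij
        have := hS i
        have := hS j
        by_cases h1 : i ∈ S <;> by_cases h2 : j ∈ S <;> simp [vecMulVec_apply, h1, h2]
        exact hS i h1 j h2 hij
    refine ⟨hX, hX, span_full G _ rfl (fun i => ?_) hX⟩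
    by_cases h : i ∈ S <;> simp [h]
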